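/- arXiv:2405.07999 — 7 statements merged into one kernel-verified Lean document; each statement's English description precedes it below -/
import Mathlib

section
/- Let C be a nonempty closed bounded convex subset of a real Hilbert space H, b ≥ 0, and T : C → C a b-enriched nonexpansive mapping, i.e. ‖b(x−y) + Tx − Ty‖ ≤ (b+1)‖x−y‖ for all x, y ∈ C. Then T has at least one fixed point in C. -/
open Filter Topology

section NonexpansiveMaps

variable {H : Type*} [NormedAddCommGroup H] [InnerProductSpace ℝ H]

/-- The resolvent equation `x - S x = r • (u - x)` of a nonexpansive self-map `S` of a complete
convex set is solvable for every `r > 0`. -/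
lemma exists_sub_eq_smul_sub_of_lipschitzWith_one {C : Set H} (hC : IsComplete C)
    (hconv : Convex ℝ C) {S : C → C} (hS : LipschitzWith 1 S) (u : C) {r : ℝ} (hr : 0 < r) :
    ∃ x : C, (x : H) - S x = r • ((u : H) - x) := by
  have : CompleteSpace C := hC.completeSpace_coe
  have : Nonempty C := ⟨u⟩
  have hr1 : 0 < 1 + r := by linarith
  let K : NNReal := ⟨(1 + r)⁻¹, by positivity⟩
  let F : C → C := fun x => ⟨(r / (1 + r)) • (u : H) + (1 + r)⁻¹ • (S x : H),
    hconv u.2 (S x).2 (by positivity) (by positivity) (by field_simp; ring)⟩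
  have hF : ContractingWith K F := by
    refine ⟨?_, LipschitzWith.of_dist_le_mul fun x y => ?_⟩
    · rw [← NNReal.coe_lt_coe]
      exact inv_lt_one_of_one_lt₀ (by linarith)
    · have hxy := hS.dist_le_mul x y
      rw [NNReal.coe_one, one_mul, Subtype.dist_eq, dist_eq_norm] at hxy
      have hsub : (F x : H) - F y = (1 + r)⁻¹ • ((S x : H) - S y) := by
        simp only [F]
        module
      rw [Subtype.dist_eq, dist_eq_norm, hsub, norm_smul, Real.norm_of_nonneg (by positivity)]
      exact mul_le_mul_of_nonneg_left hxy (by positivity)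
  refine ⟨hF.fixedPoint F, ?_⟩
  have hfix : (F (hF.fixedPoint F) : H) = hF.fixedPoint F :=
    congrArg Subtype.val hF.fixedPoint_isFixedPt
  generalize hF.fixedPoint F = x at hfix ⊢
  have hscaled : (1 + r) • (x : H) = r • (u : H) + S x := by
    rw [← hfix, smul_add, smul_smul, smul_smul, mul_div_cancel₀ _ hr1.ne',
      mul_inv_cancel₀ hr1.ne', one_smul]
  rw [smul_sub, eq_sub_of_add_eq hscaled.symm]
  module

/-- Displacements of a nonexpansive map are monotone. -/
lemma inner_sub_sub_nonneg_of_norm_sub_le {x y x' y' : H} (h : ‖x' - y'‖ ≤ ‖x - y‖) :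
    0 ≤ inner ℝ ((x - x') - (y - y')) (x - y) := by
  have hcs := real_inner_le_norm (x' - y') (x - y)
  have hmul := mul_le_mul_of_nonneg_right h (norm_nonneg (x - y))
  rw [show (x - x') - (y - y') = (x - y) - (x' - y') by abel, inner_sub_left,
    real_inner_self_eq_norm_mul_norm]
  linarith

/-- If `⟪s • q - r • p, p - q⟫ ≥ 0` with `0 < s < r`, then `‖p - q‖² ≤ ‖q‖² - ‖p‖²`. -/
lemma norm_sub_sq_le_of_inner_smul_sub_smul_nonneg {p q : H} {r s : ℝ} (hs : 0 < s)
    (hsr : s < r) (h : 0 ≤ inner ℝ (s • q - r • p) (p - q)) :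
    ‖p - q‖ ^ 2 ≤ ‖q‖ ^ 2 - ‖p‖ ^ 2 := by
  have hn := norm_sub_sq_real p q
  simp only [inner_sub_left, inner_sub_right, real_inner_smul_left,
    real_inner_self_eq_norm_sq, real_inner_comm p q] at h
  have key : (r + s) * ‖p - q‖ ^ 2 ≤ (r - s) * (‖q‖ ^ 2 - ‖p‖ ^ 2) := by
    rw [hn]; linarith
  have hd : 0 ≤ ‖q‖ ^ 2 - ‖p‖ ^ 2 := by
    have h0 : 0 ≤ (r + s) * ‖p - q‖ ^ 2 := mul_nonneg (by linarith) (sq_nonneg _)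
    exact nonneg_of_mul_nonneg_right (h0.trans key) (by linarith)
  refine le_of_mul_le_mul_left (key.trans ?_) (show 0 < r + s by linarith)
  exact mul_le_mul_of_nonneg_right (by linarith) hd

/-- A bounded sequence with `‖p m - p n‖² ≤ ‖p n‖² - ‖p m‖²` for `m < n` is Cauchy. -/
lemma cauchySeq_of_norm_sub_sq_le {E : Type*} [SeminormedAddCommGroup E] {p : ℕ → E} {R : ℝ}
    (hR : ∀ n, ‖p n‖ ≤ R)
    (h : ∀ m n, m < n → ‖p m - p n‖ ^ 2 ≤ ‖p n‖ ^ 2 - ‖p m‖ ^ 2) : CauchySeq p := by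
  have hle : ∀ m n, m ≤ n → ‖p m - p n‖ ^ 2 ≤ ‖p n‖ ^ 2 - ‖p m‖ ^ 2 := fun m n hmn => by
    rcases hmn.eq_or_lt with rfl | hlt
    · simp
    · exact h m n hlt
  have hmono : Monotone fun n => ‖p n‖ ^ 2 := fun m n hmn => by
    have := hle m n hmn
    have := sq_nonneg ‖p m - p n‖
    dsimp only
    linarith
  have hbdd : BddAbove (Set.range fun n => ‖p n‖ ^ 2) := by
    refine ⟨R ^ 2, ?_⟩
    rintro _ ⟨n, rfl⟩
    exact pow_le_pow_left₀ (norm_nonneg _) (hR n) 2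
  have hcau := (tendsto_atTop_ciSup hmono hbdd).cauchySeq
  rw [Metric.cauchySeq_iff'] at hcau ⊢
  intro ε hε
  obtain ⟨N, hN⟩ := hcau (ε ^ 2) (by positivity)
  refine ⟨N, fun n hn => ?_⟩
  have hlt := (le_abs_self _).trans_lt (hN n hn)
  rw [dist_comm, dist_eq_norm]
  exact lt_of_pow_lt_pow_left₀ 2 hε.le ((hle N n hn).trans_lt hlt)

/-- **Browder's fixed point theorem** in Hilbert spaces: a nonexpansive self-map of a nonempty
complete bounded convex set has a fixed point. -/
theorem exists_fixedPoint_of_lipschitzWith_one {C : Set H} (hne : C.Nonempty)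
    (hC : IsComplete C) (hbdd : Bornology.IsBounded C) (hconv : Convex ℝ C) {S : C → C}
    (hS : LipschitzWith 1 S) : ∃ x : C, S x = x := by
  obtain ⟨u₀, hu₀⟩ := hne
  let u : C := ⟨u₀, hu₀⟩
  let r : ℕ → ℝ := fun n => 1 / ((n : ℝ) + 1)
  have hr : ∀ n, 0 < r n := fun n => Nat.one_div_pos_of_nat
  choose x hx using fun n =>
    exists_sub_eq_smul_sub_of_lipschitzWith_one hC hconv hS u (hr n)
  obtain ⟨R, hR⟩ := Metric.isBounded_iff.1 hbdd
  have hxR : ∀ n, ‖(x n : H) - u‖ ≤ R := fun n => by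
    rw [← dist_eq_norm]
    exact hR (x n).2 u.2
  have hcau : CauchySeq fun n => (x n : H) - u := by
    refine cauchySeq_of_norm_sub_sq_le hxR fun m n hmn => ?_
    have hlt : r n < r m := Nat.one_div_lt_one_div hmn
    refine norm_sub_sq_le_of_inner_smul_sub_smul_nonneg (hr n) hlt ?_
    have hSxy := hS.dist_le_mul (x m) (x n)
    rw [NNReal.coe_one, one_mul, Subtype.dist_eq, Subtype.dist_eq, dist_eq_norm,
      dist_eq_norm] at hSxy
    have hinner := inner_sub_sub_nonneg_of_norm_sub_le hSxy
    rw [hx, hx] at hinner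
    convert hinner using 2
    · module
    · abel
  have hcau' : CauchySeq x := by
    rw [Metric.cauchySeq_iff'] at hcau ⊢
    simpa only [dist_sub_right, Subtype.dist_eq] using hcau
  have : CompleteSpace C := hC.completeSpace_coe
  obtain ⟨z, hz⟩ := cauchySeq_tendsto_of_complete hcau'
  have hzH : Tendsto (fun n => (x n : H)) atTop (𝓝 z) :=
    (continuous_subtype_val.tendsto z).comp hz
  have hSz : Tendsto (fun n => (S (x n) : H)) atTop (𝓝 (S z)) :=
    ((continuous_subtype_val.comp hS.continuous).tendsto z).comp hz
  have hzero : Tendsto (fun n => (x n : H) - S (x n)) atTop (𝓝 ((0 : ℝ) • ((u : H) - z))) := by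
    simp only [hx]
    exact tendsto_one_div_add_atTop_nhds_zero_nat.smul (tendsto_const_nhds.sub hzH)
  have hdiff := tendsto_nhds_unique (hzH.sub hSz) hzero
  rw [zero_smul, sub_eq_zero] at hdiff
  exact ⟨z, Subtype.ext hdiff.symm⟩

end NonexpansiveMaps

/-- A `b`-enriched nonexpansive self-mapping of a nonempty closed bounded convex
subset of a real Hilbert space has at least one fixed point. -/
theorem enriched_nonexpansive_has_fixedPoint
    {H : Type*} [NormedAddCommGroup H] [InnerProductSpace ℝ H] [CompleteSpace H]
    (C : Set H) (hne : C.Nonempty) (hclosed : IsClosed C)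
    (hbdd : Bornology.IsBounded C) (hconv : Convex ℝ C)
    (b : ℝ) (hb : 0 ≤ b) (T : C → C)
    (hT : ∀ x y : C, ‖b • ((x : H) - (y : H)) + ((T x : H) - (T y : H))‖ ≤
      (b + 1) * ‖(x : H) - (y : H)‖) :
    ∃ x : C, T x = x := by
  have hb1 : 0 < b + 1 := by linarith
  let S : C → C := fun x => ⟨(b / (b + 1)) • (x : H) + (b + 1)⁻¹ • (T x : H),
    hconv x.2 (T x).2 (by positivity) (by positivity) (by field_simp)⟩
  have hscaled : ∀ x, (b + 1) • (S x : H) = b • (x : H) + T x := fun x => by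
    simp only [S]
    rw [smul_add, smul_smul, smul_smul, mul_div_cancel₀ _ hb1.ne', mul_inv_cancel₀ hb1.ne',
      one_smul]
  have hS : LipschitzWith 1 S := by
    refine LipschitzWith.of_dist_le_mul fun x y => ?_
    rw [NNReal.coe_one, one_mul, Subtype.dist_eq, Subtype.dist_eq, dist_eq_norm, dist_eq_norm]
    refine le_of_mul_le_mul_left ?_ hb1
    calc (b + 1) * ‖(S x : H) - S y‖ = ‖(b + 1) • ((S x : H) - S y)‖ := by
          rw [norm_smul, Real.norm_of_nonneg hb1.le]
      _ = ‖b • ((x : H) - y) + ((T x : H) - T y)‖ := by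
          rw [smul_sub, hscaled, hscaled]
          congr 1
          module
      _ ≤ (b + 1) * ‖(x : H) - y‖ := hT x y
  obtain ⟨x, hx⟩ := exists_fixedPoint_of_lipschitzWith_one hne hclosed.isComplete hbdd hconv hS
  refine ⟨x, Subtype.ext ?_⟩
  have h := hscaled x
  rw [hx, add_smul, one_smul] at h
  exact (add_left_cancel h).symm
end

section
/- Let C be a nonempty closed bounded convex subset of a real Hilbert space H and T : C → C a nonexpansive mapping, i.e. ‖Tx − Ty‖ ≤ ‖x−y‖ for all x, y ∈ C. Then T has at least one fixed point in C (the Browder–Goede–Kirk fixed point theorem). -/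
/-- A sequence in a normed group is Cauchy if its pairwise squared distances are controlled by
the increments of a real sequence that is bounded above. -/
theorem cauchySeq_of_norm_sub_sq_le_sub {E : Type*} [NormedAddCommGroup E] {y : ℕ → E} {a : ℕ → ℝ}
    (ha : BddAbove (Set.range a)) (h : ∀ n m, n < m → ‖y n - y m‖ ^ 2 ≤ a m - a n) :
    CauchySeq y := by
  have hmono : Monotone a := monotone_nat_of_le_succ fun n => by
    nlinarith [h n (n + 1) n.lt_succ_self, sq_nonneg ‖y n - y (n + 1)‖]
  have hcauchy : CauchySeq a := (tendsto_atTop_ciSup hmono ha).cauchySeq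
  rw [Metric.cauchySeq_iff'] at hcauchy ⊢
  intro ε hε
  obtain ⟨N, hN⟩ := hcauchy (ε ^ 2) (by positivity)
  refine ⟨N, fun n hn => ?_⟩
  rcases hn.eq_or_lt with rfl | hlt
  · simpa using hε
  · have hd := (le_abs_self _).trans_lt (Real.dist_eq (a n) (a N) ▸ hN n hn)
    rw [dist_comm, dist_eq_norm]
    exact lt_of_pow_lt_pow_left₀ 2 hε.le ((h N n hlt).trans_lt hd)

/-- A nonexpansive self-map of a closed convex set has Browder approximants: for each `ε > 0`
the equation `T x = x + ε • (x - u)` is solvable. -/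
theorem exists_eq_add_smul_sub_of_nonexpansive
    {E : Type*} [NormedAddCommGroup E] [NormedSpace ℝ E] [CompleteSpace E]
    {C : Set E} (hclosed : IsClosed C) (hconv : Convex ℝ C) {T : C → C}
    (hT : ∀ x y : C, ‖(T x : E) - (T y : E)‖ ≤ ‖(x : E) - (y : E)‖)
    (u : C) {ε : ℝ} (hε : 0 < ε) :
    ∃ x : C, (T x : E) = x + ε • ((x : E) - u) := by
  have : CompleteSpace C := hclosed.completeSpace_coe
  have : Nonempty C := ⟨u⟩
  have hs : 0 < 1 + ε := by positivity
  let F : C → C := fun x => ⟨(1 + ε)⁻¹ • (T x : E) + (ε * (1 + ε)⁻¹) • (u : E),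
    hconv (T x).2 u.2 (by positivity) (by positivity) (by field_simp)⟩
  have hF : ContractingWith (Real.toNNReal (1 + ε)⁻¹) F := by
    refine ⟨?_, LipschitzWith.of_dist_le_mul fun x y => ?_⟩
    · exact Real.toNNReal_lt_one.2 (inv_lt_one_of_one_lt₀ (by linarith))
    · rw [Subtype.dist_eq, Subtype.dist_eq, dist_eq_norm, dist_eq_norm,
        Real.coe_toNNReal _ (by positivity)]
      simp only [F, add_sub_add_right_eq_sub, ← smul_sub]
      rw [norm_smul, Real.norm_of_nonneg (by positivity)]
      exact mul_le_mul_of_nonneg_left (hT x y) (by positivity)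
  obtain ⟨x, hx⟩ : ∃ x, F x = x := ⟨_, hF.fixedPoint_isFixedPt⟩
  refine ⟨x, ?_⟩
  have hx' : (1 + ε)⁻¹ • (T x : E) + (ε * (1 + ε)⁻¹) • (u : E) = x := congrArg Subtype.val hx
  have hmul := congrArg ((1 + ε) • ·) hx'
  simp only [smul_add, smul_smul] at hmul
  rw [mul_inv_cancel₀ hs.ne', mul_left_comm, mul_inv_cancel₀ hs.ne', one_smul, mul_one] at hmul
  rw [eq_sub_of_add_eq hmul]
  module

/-- Two Browder approximants of a nonexpansive map, written as displacements `y`, `z` from the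
base point, satisfy a monotonicity estimate. -/
theorem norm_sub_sq_le_sub_of_norm_add_smul_sub_le
    {E : Type*} [NormedAddCommGroup E] [InnerProductSpace ℝ E] {y z : E} {ε δ : ℝ}
    (hδ : 0 < δ) (hlt : δ < ε) (h : ‖(y + ε • y) - (z + δ • z)‖ ≤ ‖y - z‖) :
    ‖y - z‖ ^ 2 ≤ ‖z‖ ^ 2 - ‖y‖ ^ 2 := by
  have hsq : ‖(y - z) + (ε • y - δ • z)‖ ^ 2 ≤ ‖y - z‖ ^ 2 := by
    rw [show (y - z) + (ε • y - δ • z) = (y + ε • y) - (z + δ • z) by abel]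
    gcongr
  have hinner : inner ℝ (y - z) (ε • y - δ • z) ≤ 0 := by
    rw [norm_add_sq_real] at hsq
    nlinarith [sq_nonneg ‖ε • y - δ • z‖]
  have hexp := norm_sub_sq_real y z
  simp only [inner_sub_left, inner_sub_right, real_inner_smul_right, real_inner_self_eq_norm_sq,
    real_inner_comm y z] at hinner
  have hkey : (ε + δ) * ‖y - z‖ ^ 2 ≤ (ε - δ) * (‖z‖ ^ 2 - ‖y‖ ^ 2) := by
    rw [hexp]
    linarith
  have hnonneg : 0 ≤ ‖z‖ ^ 2 - ‖y‖ ^ 2 := by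
    refine nonneg_of_mul_nonneg_right (le_trans ?_ hkey) (sub_pos.2 hlt)
    have : 0 < ε + δ := by linarith
    positivity
  nlinarith

open Filter Topology

/-- Browder–Goede–Kirk: a nonexpansive self-mapping of a nonempty closed bounded
convex subset of a real Hilbert space has at least one fixed point. -/
theorem browder_goede_kirk
    {H : Type*} [NormedAddCommGroup H] [InnerProductSpace ℝ H] [CompleteSpace H]
    (C : Set H) (hne : C.Nonempty) (hclosed : IsClosed C)
    (hbdd : Bornology.IsBounded C) (hconv : Convex ℝ C)
    (T : C → C)
    (hT : ∀ x y : C, ‖(T x : H) - (T y : H)‖ ≤ ‖(x : H) - (y : H)‖) :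
    ∃ x : C, T x = x := by
  obtain ⟨u, hu⟩ := hne
  let ε : ℕ → ℝ := fun n => 1 / ((n : ℝ) + 1)
  have hε : ∀ n, 0 < ε n := fun n => Nat.one_div_pos_of_nat
  choose x hx using fun n =>
    exists_eq_add_smul_sub_of_nonexpansive hclosed hconv hT ⟨u, hu⟩ (hε n)
  have hest : ∀ n m, n < m → ‖((x n : H) - u) - (x m - u)‖ ^ 2 ≤
      ‖(x m : H) - u‖ ^ 2 - ‖(x n : H) - u‖ ^ 2 := fun n m hnm => by
    refine norm_sub_sq_le_sub_of_norm_add_smul_sub_le (hε m) (Nat.one_div_lt_one_div hnm) ?_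
    have h := hT (x n) (x m)
    rw [hx, hx] at h
    convert h using 2 <;> abel
  obtain ⟨R, hR⟩ := Metric.isBounded_iff.1 hbdd
  have hcauchy : CauchySeq fun n => (x n : H) := by
    refine cauchySeq_of_norm_sub_sq_le_sub
      (a := fun n => ‖(x n : H) - u‖ ^ 2) ⟨R ^ 2, ?_⟩ (by simpa using hest)
    rintro _ ⟨n, rfl⟩
    have := dist_eq_norm (x n : H) u ▸ hR (x n).2 hu
    dsimp only
    gcongr
  obtain ⟨p, hpC, hp'⟩ := cauchySeq_tendsto_of_isComplete hclosed.isComplete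
    (fun n => (x n).2) hcauchy
  lift p to C using hpC
  have hp : Tendsto x atTop (𝓝 p) := tendsto_subtype_rng.2 hp'
  have hTcont : Continuous T := (LipschitzWith.mk_one fun a b => by
    simpa [Subtype.dist_eq, dist_eq_norm] using hT a b).continuous
  have hTp : Tendsto (fun n => (T (x n) : H)) atTop (𝓝 (T p)) :=
    ((continuous_subtype_val.comp hTcont).tendsto p).comp hp
  have hlim : Tendsto (fun n => (T (x n) : H)) atTop (𝓝 p) := by
    simp only [hx]
    simpa [ε] using hp'.add
      ((tendsto_one_div_add_atTop_nhds_zero_nat (𝕜 := ℝ)).smul (hp'.sub_const u))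
  exact ⟨p, Subtype.ext (tendsto_nhds_unique hTp hlim)⟩
end

section
/- Let X be a real normed space, b > 0, and T : X → X a b-modified enriched nonexpansive mapping, i.e. ‖b(x−y) + Tx − Ty‖ ≤ ‖x−y‖ for all x, y ∈ X. Set λ = 1/(b+1) and define T_λ x = (1−λ)x + λTx. Then ‖T_λ x − T_λ y‖ ≤ λ‖x−y‖ for all x, y ∈ X; in particular, T_λ is a Banach contraction with contraction constant λ ∈ (0,1). -/
/-- If `T` is `b`-modified enriched nonexpansive with `b > 0` and `λ = 1 / (b + 1)`,
then the averaged map `T_λ x = (1 - λ) • x + λ • T x` is a Banach contraction with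
constant `λ ∈ (0,1)`. -/
theorem averaged_of_modified_enriched_is_contraction
    {X : Type*} [NormedAddCommGroup X] [NormedSpace ℝ X]
    (b : ℝ) (hb : 0 < b) (T : X → X)
    (hT : ∀ x y : X, ‖b • (x - y) + (T x - T y)‖ ≤ ‖x - y‖)
    (lam : ℝ) (hlam : lam = 1 / (b + 1))
    (Tlam : X → X) (hTlam : ∀ x : X, Tlam x = (1 - lam) • x + lam • T x) :
    (0 < lam ∧ lam < 1) ∧ ∀ x y : X, ‖Tlam x - Tlam y‖ ≤ lam * ‖x - y‖ := by
  have hpos : 0 < lam := by rw [hlam]; positivity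
  have hlt : lam < 1 := by
    rw [hlam, div_lt_one (by positivity)]
    linarith
  have hsub : 1 - lam = lam * b := by
    rw [hlam]
    field_simp
    ring
  refine ⟨⟨hpos, hlt⟩, fun x y => ?_⟩
  have hdiff : Tlam x - Tlam y = lam • (b • (x - y) + (T x - T y)) := by
    rw [hTlam, hTlam, hsub]
    module
  rw [hdiff, norm_smul, Real.norm_of_nonneg hpos.le]
  exact mul_le_mul_of_nonneg_left (hT x y) hpos.le
end

section
/- Let X be a real Banach space, b > 0, and T : X → X a b-modified enriched nonexpansive mapping, i.e. ‖b(x−y) + Tx − Ty‖ ≤ ‖x−y‖ for all x, y ∈ X. Then T has exactly one fixed point x* ∈ X. -/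
/-- A point is fixed by `T` iff it is fixed by the average `(b + 1)⁻¹ • (b • id + T)`. -/
lemma isFixedPt_averaged_iff {X : Type*} [AddCommGroup X] [Module ℝ X]
    {b : ℝ} (hb : b + 1 ≠ 0) (T : X → X) (x : X) :
    Function.IsFixedPt (fun x => (b + 1)⁻¹ • (b • x + T x)) x ↔ T x = x := by
  rw [Function.IsFixedPt, inv_smul_eq_iff₀ hb, add_smul, one_smul, add_right_inj]

/-- The average `(b + 1)⁻¹ • (b • id + T)` of a `b`-modified enriched nonexpansive mapping
is a contraction with constant `(b + 1)⁻¹`. -/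
lemma contractingWith_averaged {X : Type*} [NormedAddCommGroup X] [NormedSpace ℝ X]
    {b : ℝ} (hb : 0 < b) {T : X → X}
    (hT : ∀ x y : X, ‖b • (x - y) + (T x - T y)‖ ≤ ‖x - y‖) :
    ContractingWith (Real.toNNReal (b + 1)⁻¹) (fun x => (b + 1)⁻¹ • (b • x + T x)) := by
  have hpos : 0 ≤ (b + 1)⁻¹ := by positivity
  refine ⟨Real.toNNReal_lt_one.2 (inv_lt_one_of_one_lt₀ (by linarith)),
    LipschitzWith.of_dist_le_mul fun x y => ?_⟩
  rw [Real.coe_toNNReal _ hpos, dist_eq_norm, dist_eq_norm, ← smul_sub, norm_smul,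
    Real.norm_of_nonneg hpos, add_sub_add_comm, ← smul_sub]
  exact mul_le_mul_of_nonneg_left (hT x y) hpos

/-- A `b`-modified enriched nonexpansive mapping with `b > 0` on a real Banach
space has exactly one fixed point. -/
theorem modified_enriched_nonexpansive_existsUnique_fixedPoint
    {X : Type*} [NormedAddCommGroup X] [NormedSpace ℝ X] [CompleteSpace X]
    (b : ℝ) (hb : 0 < b) (T : X → X)
    (hT : ∀ x y : X, ‖b • (x - y) + (T x - T y)‖ ≤ ‖x - y‖) :
    ∃! xstar : X, T xstar = xstar := by
  have hS := contractingWith_averaged hb hT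
  have hiff := isFixedPt_averaged_iff (by positivity : b + 1 ≠ 0) T
  exact ⟨_, (hiff _).1 hS.fixedPoint_isFixedPt,
    fun y hy => hS.fixedPoint_unique ((hiff y).2 hy)⟩
end

section
/- Let X be a real Banach space, b > 0, and T : X → X a b-modified enriched nonexpansive mapping, i.e. ‖b(x−y) + Tx − Ty‖ ≤ ‖x−y‖ for all x, y ∈ X. Set λ = 1/(b+1). Then for every initial point x₀ ∈ X, the Krasnoselskii iteration defined by x_{n+1} = (1−λ)x_n + λT x_n converges (in norm) to the unique fixed point x* of T. -/
/-- The Krasnoselskii averaging of a modified enriched nonexpansive mapping is a contraction. -/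
theorem contractingWith_krasnoselskii {X : Type*} [NormedAddCommGroup X] [NormedSpace ℝ X]
    {b lam : ℝ} {T : X → X} (hT : ∀ x y : X, ‖b • (x - y) + (T x - T y)‖ ≤ ‖x - y‖)
    (h0 : 0 ≤ lam) (h1 : lam < 1) (hlb : 1 - lam = lam * b) :
    ContractingWith ⟨lam, h0⟩ (fun x => (1 - lam) • x + lam • T x) := by
  refine ⟨h1, LipschitzWith.of_dist_le_mul fun x y => ?_⟩
  have heq : ((1 - lam) • x + lam • T x) - ((1 - lam) • y + lam • T y)
      = lam • (b • (x - y) + (T x - T y)) := by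
    rw [hlb]
    module
  rw [dist_eq_norm, dist_eq_norm, heq, norm_smul, Real.norm_of_nonneg h0]
  exact mul_le_mul_of_nonneg_left (hT x y) h0

/-- Krasnoselskii averaging with a nonzero parameter preserves the set of fixed points. -/
theorem isFixedPt_krasnoselskii_iff {X : Type*} [AddCommGroup X] [Module ℝ X]
    {lam : ℝ} {T : X → X} {x : X} (h : lam ≠ 0) :
    Function.IsFixedPt (fun x => (1 - lam) • x + lam • T x) x ↔ T x = x := by
  have heq : (1 - lam) • x + lam • T x - x = lam • (T x - x) := by module
  rw [Function.IsFixedPt, ← sub_eq_zero, heq, smul_eq_zero_iff_right h, sub_eq_zero]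

/-- For a `b`-modified enriched nonexpansive mapping `T` with `b > 0` on a real
Banach space and `λ = 1 / (b + 1)`, the Krasnoselskii iteration
`x_{n+1} = (1 - λ) • x_n + λ • T x_n` converges to the unique fixed point of `T`
for every initial point. -/
theorem krasnoselskii_converges_to_fixedPoint
    {X : Type*} [NormedAddCommGroup X] [NormedSpace ℝ X] [CompleteSpace X]
    (b : ℝ) (hb : 0 < b) (T : X → X)
    (hT : ∀ x y : X, ‖b • (x - y) + (T x - T y)‖ ≤ ‖x - y‖)
    (lam : ℝ) (hlam : lam = 1 / (b + 1)) :
    ∃ xstar : X, T xstar = xstar ∧ (∀ y : X, T y = y → y = xstar) ∧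
      ∀ x : ℕ → X, (∀ n : ℕ, x (n + 1) = (1 - lam) • x n + lam • T (x n)) →
        Filter.Tendsto x Filter.atTop (nhds xstar) := by
  have hb1 : 0 < b + 1 := by linarith
  have hpos : 0 < lam := hlam ▸ by positivity
  have hlt : lam < 1 := by
    rw [hlam, div_lt_one hb1]
    linarith
  have hlb : 1 - lam = lam * b := by
    rw [hlam]
    field_simp
    ring
  have hS := contractingWith_krasnoselskii hT hpos.le hlt hlb
  have hfix (x : X) := isFixedPt_krasnoselskii_iff (T := T) (x := x) hpos.ne'
  refine ⟨hS.fixedPoint _, (hfix _).1 hS.fixedPoint_isFixedPt,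
    fun y hy => hS.fixedPoint_unique ((hfix y).2 hy), fun x hx => ?_⟩
  have hiter : x = fun n => (fun y => (1 - lam) • y + lam • T y)^[n] (x 0) := by
    funext n
    induction n with
    | zero => rfl
    | succ n ih => rw [Function.iterate_succ_apply', ← ih, hx]
  rw [hiter]
  exact hS.tendsto_iterate_fixedPoint (x 0)
end

section
/- Let C be a nonempty closed bounded convex subset of a real Hilbert space H, b ≥ 0, and T : C → C a b-modified enriched nonexpansive mapping, i.e. ‖b(x−y) + Tx − Ty‖ ≤ ‖x−y‖ for all x, y ∈ C. Then T has at least one fixed point in C. -/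
open Filter Topology

/-- In a real inner product space, `‖b • w + v‖ ≤ ‖w‖` with `b ≥ 0` forces `⟪v, w⟫ ≤ ‖w‖ ^ 2`. -/
theorem inner_le_norm_sq_of_norm_smul_add_le {H : Type*} [NormedAddCommGroup H]
    [InnerProductSpace ℝ H] {b : ℝ} (hb : 0 ≤ b) {v w : H} (h : ‖b • w + v‖ ≤ ‖w‖) :
    inner ℝ v w ≤ ‖w‖ ^ 2 := by
  have h₁ : inner ℝ (b • w + v) w ≤ ‖w‖ * ‖w‖ :=
    (real_inner_le_norm _ _).trans (by gcongr)
  rw [inner_add_left, real_inner_smul_left, real_inner_self_eq_norm_sq] at h₁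
  nlinarith [mul_nonneg hb (sq_nonneg ‖w‖)]

/-- If `⟪s • u - r • v, u - v⟫ ≤ 0` with `0 < r < s`, then `‖u - v‖ ^ 2 ≤ ‖v‖ ^ 2 - ‖u‖ ^ 2`. -/
theorem norm_sub_sq_le_of_inner_smul_sub_nonpos {H : Type*} [NormedAddCommGroup H]
    [InnerProductSpace ℝ H] {s r : ℝ} (hr : 0 < r) (hrs : r < s) {u v : H}
    (h : inner ℝ (s • u - r • v) (u - v) ≤ 0) :
    ‖u - v‖ ^ 2 ≤ ‖v‖ ^ 2 - ‖u‖ ^ 2 := by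
  have h₁ := norm_sub_sq_real u v
  simp only [inner_sub_left, inner_sub_right, real_inner_smul_left,
    real_inner_self_eq_norm_sq, real_inner_comm u v] at h
  have h₂ : (s + r) * ‖u - v‖ ^ 2 ≤ (s - r) * (‖v‖ ^ 2 - ‖u‖ ^ 2) := by
    rw [h₁]; nlinarith
  have h₃ : 0 ≤ ‖v‖ ^ 2 - ‖u‖ ^ 2 := by
    by_contra! hneg
    nlinarith [mul_pos (sub_pos.2 hrs) (neg_pos.2 hneg), sq_nonneg ‖u - v‖]
  nlinarith [mul_nonneg hr.le h₃]

/-- A sequence with `dist (u m) (u n) ^ 2 ≤ a n - a m` for `m < n`, where `a` is bounded above,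
is Cauchy. -/
theorem cauchySeq_of_dist_sq_le_sub {X : Type*} [PseudoMetricSpace X] {u : ℕ → X} {a : ℕ → ℝ}
    (ha : BddAbove (Set.range a)) (h : ∀ m n, m < n → dist (u m) (u n) ^ 2 ≤ a n - a m) :
    CauchySeq u := by
  have hmono : Monotone a := monotone_nat_of_le_succ fun n => by
    nlinarith [h n (n + 1) n.lt_succ_self, sq_nonneg (dist (u n) (u (n + 1)))]
  have hlim := tendsto_atTop_ciSup hmono ha
  refine cauchySeq_of_le_tendsto_0 (fun N => √((⨆ i, a i) - a N)) ?_ ?_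
  · have key : ∀ N m n, N ≤ m → m < n → dist (u m) (u n) ≤ √((⨆ i, a i) - a N) :=
      fun N m n hm hmn => Real.le_sqrt_of_sq_le (by
        linarith [h m n hmn, hmono hm, le_ciSup ha n])
    intro m n N hm hn
    rcases lt_trichotomy m n with hmn | rfl | hmn
    · exact key N m n hm hmn
    · rw [dist_self]; exact Real.sqrt_nonneg _
    · rw [dist_comm]; exact key N n m hn hmn
  · have := (hlim.const_sub (⨆ i, a i)).sqrt
    simpa using this

/-- The resolvent equation `x - T x = s • (z - x)` is solvable for every `s > 0`. -/
theorem exists_sub_eq_smul_sub {H : Type*} [NormedAddCommGroup H] [InnerProductSpace ℝ H]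
    [CompleteSpace H] {C : Set H} (hclosed : IsClosed C) (hconv : Convex ℝ C)
    {b : ℝ} (hb : 0 ≤ b) {T : C → C}
    (hT : ∀ x y : C, ‖b • ((x : H) - (y : H)) + ((T x : H) - (T y : H))‖ ≤
      ‖(x : H) - (y : H)‖) (z : C) {s : ℝ} (hs : 0 < s) :
    ∃ x : C, (x : H) - T x = s • ((z : H) - x) := by
  have hpos : 0 < 1 + s + b := by linarith
  have hmem : ∀ x : C, (1 + s + b)⁻¹ • (s • (z : H) + b • (x : H) + (T x : H)) ∈ C := by
    intro x
    have hzx : (s / (s + (b + 1))) • (z : H) + ((b + 1) / (s + (b + 1))) •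
        ((b / (b + 1)) • (x : H) + (1 / (b + 1)) • (T x : H)) ∈ C :=
      convex_iff_div.1 hconv z.2
        (convex_iff_div.1 hconv x.2 (T x).2 hb zero_le_one (by linarith))
        hs.le (by linarith) (by linarith)
    convert hzx using 1
    have : b + 1 ≠ 0 := by linarith
    have : s + (b + 1) ≠ 0 := by linarith
    have : 1 + s + b ≠ 0 := hpos.ne'
    match_scalars <;> field_simp <;> ring
  let G : C → C := fun x => ⟨_, hmem x⟩
  have hG : ContractingWith (Real.toNNReal (1 + s + b)⁻¹) G := by
    refine ⟨?_, LipschitzWith.of_dist_le_mul fun x y => ?_⟩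
    · rw [Real.toNNReal_lt_one]
      exact inv_lt_one_of_one_lt₀ (by linarith)
    · rw [Real.coe_toNNReal _ (inv_nonneg.2 hpos.le), Subtype.dist_eq, Subtype.dist_eq,
        dist_eq_norm, dist_eq_norm]
      have hsub : (G x : H) - G y =
          (1 + s + b)⁻¹ • (b • ((x : H) - (y : H)) + ((T x : H) - (T y : H))) := by
        simp only [G]; module
      rw [hsub, norm_smul, Real.norm_of_nonneg (inv_nonneg.2 hpos.le)]
      exact mul_le_mul_of_nonneg_left (hT x y) (inv_nonneg.2 hpos.le)
  have : CompleteSpace C := hclosed.completeSpace_coe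
  have : Nonempty C := ⟨z⟩
  refine ⟨hG.fixedPoint, ?_⟩
  set x := hG.fixedPoint
  have hx : (1 + s + b)⁻¹ • (s • (z : H) + b • (x : H) + (T x : H)) = x :=
    congrArg Subtype.val hG.fixedPoint_isFixedPt
  rw [inv_smul_eq_iff₀ hpos.ne'] at hx
  have hTx : (T x : H) = (1 + s + b) • (x : H) - s • (z : H) - b • (x : H) := by
    rw [← hx]; abel
  rw [hTx]
  module

/-- A `b`-modified enriched nonexpansive self-mapping of a nonempty closed bounded
convex subset of a real Hilbert space has at least one fixed point. -/
theorem modified_enriched_nonexpansive_has_fixedPoint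
    {H : Type*} [NormedAddCommGroup H] [InnerProductSpace ℝ H] [CompleteSpace H]
    (C : Set H) (hne : C.Nonempty) (hclosed : IsClosed C)
    (hbdd : Bornology.IsBounded C) (hconv : Convex ℝ C)
    (b : ℝ) (hb : 0 ≤ b) (T : C → C)
    (hT : ∀ x y : C, ‖b • ((x : H) - (y : H)) + ((T x : H) - (T y : H))‖ ≤
      ‖(x : H) - (y : H)‖) :
    ∃ x : C, T x = x := by
  obtain ⟨z, hz⟩ := hne
  let s : ℕ → ℝ := fun n => 1 / ((n : ℝ) + 1)
  have hs : ∀ n, 0 < s n := fun n => Nat.one_div_pos_of_nat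
  choose x hx using fun n => exists_sub_eq_smul_sub hclosed hconv hb hT ⟨z, hz⟩ (hs n)
  obtain ⟨R, hR⟩ := hbdd.subset_closedBall z
  have hxR : ∀ n, ‖(x n : H) - z‖ ≤ R := fun n => by
    simpa [dist_eq_norm] using hR (x n).2
  have hcauchy : CauchySeq x := by
    refine cauchySeq_of_dist_sq_le_sub (a := fun n => ‖(x n : H) - z‖ ^ 2) ?_ fun m n hmn => ?_
    · refine ⟨R ^ 2, ?_⟩
      rintro _ ⟨n, rfl⟩
      exact pow_le_pow_left₀ (norm_nonneg _) (hxR n) 2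
    · have hle := inner_le_norm_sq_of_norm_smul_add_le hb (hT (x m) (x n))
      have key := norm_sub_sq_le_of_inner_smul_sub_nonpos (hs n)
        (Nat.one_div_lt_one_div hmn : s n < s m) (u := (x m : H) - z) (v := (x n : H) - z) ?_
      · rwa [sub_sub_sub_cancel_right, ← dist_eq_norm] at key
      · have hdiff : s m • ((x m : H) - z) - s n • ((x n : H) - z) =
            ((T (x m) : H) - T (x n)) - ((x m : H) - x n) := by
          have hm : s m • ((x m : H) - z) = T (x m) - x m := by
            rw [← neg_sub z, smul_neg, ← hx m, neg_sub]
          have hn : s n • ((x n : H) - z) = T (x n) - x n := by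
            rw [← neg_sub z, smul_neg, ← hx n, neg_sub]
          rw [hm, hn]; abel
        rw [hdiff, sub_sub_sub_cancel_right, inner_sub_left, real_inner_self_eq_norm_sq]
        linarith
  have hTlip : LipschitzWith (Real.toNNReal (1 + b)) T := LipschitzWith.of_dist_le_mul fun x y => by
    rw [Real.coe_toNNReal _ (by linarith), Subtype.dist_eq, Subtype.dist_eq,
      dist_eq_norm, dist_eq_norm]
    have h := norm_sub_le (b • ((x : H) - y) + ((T x : H) - T y)) (b • ((x : H) - y))
    rw [add_sub_cancel_left, norm_smul, Real.norm_of_nonneg hb] at h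
    linarith [hT x y]
  have : CompleteSpace C := hclosed.completeSpace_coe
  obtain ⟨p, hp⟩ := cauchySeq_tendsto_of_complete hcauchy
  refine ⟨p, tendsto_nhds_unique ((hTlip.continuous.tendsto p).comp hp) ?_⟩
  refine (tendsto_iff_of_dist (squeeze_zero (fun _ => dist_nonneg) (g := fun n => s n * R)
    (fun n => ?_) ?_)).1 hp
  · rw [Function.comp_apply, Subtype.dist_eq, dist_eq_norm, hx n, norm_smul,
      Real.norm_of_nonneg (hs n).le, norm_sub_rev]
    exact mul_le_mul_of_nonneg_left (hxR n) (hs n).le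
  · simpa [s] using tendsto_one_div_add_atTop_nhds_zero_nat.mul_const R
end

section
/- Let X be a real Banach space, b > 0, T : X → X a b-modified enriched nonexpansive mapping (i.e. ‖b(x−y) + Tx − Ty‖ ≤ ‖x−y‖ for all x, y ∈ X), and λ = 1/(b+1). Then the sequence defined by x_{n+1} = (1−λ)x_n + λT x_n coincides with the Picard iteration of the averaged mapping T_λ x = (1−λ)x + λTx, and T_λ has a unique fixed point to which the Picard iteration x_{n+1} = T_λ x_n converges for every initial point x₀ ∈ X. -/
/-- The averaged mapping of a `b`-modified enriched nonexpansive mapping, with averaging parameter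
`1 / (b + 1)`, is a contraction with constant `1 / (b + 1)`. -/
theorem contractingWith_averaged_of_modified_enriched_nonexpansive
    {X : Type*} [NormedAddCommGroup X] [NormedSpace ℝ X] {b : ℝ} (hb : 0 < b) {T : X → X}
    (hT : ∀ x y : X, ‖b • (x - y) + (T x - T y)‖ ≤ ‖x - y‖) :
    ContractingWith (1 / (b + 1)).toNNReal
      (fun x => (1 - 1 / (b + 1)) • x + (1 / (b + 1)) • T x) := by
  have hpos : 0 < 1 / (b + 1) := by positivity
  have hcoeff : 1 - 1 / (b + 1) = 1 / (b + 1) * b := by field_simp; ring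
  refine ⟨?_, LipschitzWith.of_dist_le_mul fun x y => ?_⟩
  · rw [Real.toNNReal_lt_one, div_lt_one (by positivity)]
    linarith
  · have hsub : ((1 - 1 / (b + 1)) • x + (1 / (b + 1)) • T x) -
        ((1 - 1 / (b + 1)) • y + (1 / (b + 1)) • T y) =
        (1 / (b + 1)) • (b • (x - y) + (T x - T y)) := by
      rw [hcoeff]
      module
    rw [dist_eq_norm, dist_eq_norm, hsub, norm_smul, Real.norm_of_nonneg hpos.le,
      Real.coe_toNNReal _ hpos.le]
    exact mul_le_mul_of_nonneg_left (hT x y) hpos.le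

/-- For a `b`-modified enriched nonexpansive mapping `T` with `b > 0` on a real
Banach space and `λ = 1 / (b + 1)`: the Krasnoselskii iteration
`x_{n+1} = (1 - λ) • x_n + λ • T x_n` is exactly the Picard iteration of the
averaged mapping `T_λ x = (1 - λ) • x + λ • T x`, and `T_λ` has a unique fixed
point to which the Picard iteration converges for every initial point. -/
theorem krasnoselskii_is_picard_of_averaged
    {X : Type*} [NormedAddCommGroup X] [NormedSpace ℝ X] [CompleteSpace X]
    (b : ℝ) (hb : 0 < b) (T : X → X)
    (hT : ∀ x y : X, ‖b • (x - y) + (T x - T y)‖ ≤ ‖x - y‖)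
    (lam : ℝ) (hlam : lam = 1 / (b + 1))
    (Tlam : X → X) (hTlam : ∀ x : X, Tlam x = (1 - lam) • x + lam • T x) :
    (∀ x : ℕ → X,
      (∀ n : ℕ, x (n + 1) = (1 - lam) • x n + lam • T (x n)) ↔
      (∀ n : ℕ, x (n + 1) = Tlam (x n))) ∧
    ∃ xstar : X, Tlam xstar = xstar ∧ (∀ y : X, Tlam y = y → y = xstar) ∧
      ∀ x : ℕ → X, (∀ n : ℕ, x (n + 1) = Tlam (x n)) →
        Filter.Tendsto x Filter.atTop (nhds xstar) := by
  refine ⟨fun x => by simp only [hTlam], ?_⟩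
  have hcontr : ContractingWith (1 / (b + 1)).toNNReal Tlam := by
    rw [funext hTlam, hlam]
    exact contractingWith_averaged_of_modified_enriched_nonexpansive hb hT
  refine ⟨hcontr.fixedPoint, hcontr.fixedPoint_isFixedPt,
    fun y hy => hcontr.fixedPoint_unique hy, fun x hx => ?_⟩
  have hiter : x = fun n => Tlam^[n] (x 0) := by
    funext n
    induction n with
    | zero => rfl
    | succ n ih => rw [hx, ih, Function.iterate_succ_apply']
  rw [hiter]
  exact hcontr.tendsto_iterate_fixedPoint (x 0)
end
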